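/- Let n ≥ 2 be an integer and let F : ℝ → ℝ be continuous. Let v : [0,1] → ℝ be continuously differentiable on [0,1] and twice continuously differentiable on (0,1), with v'(0) = 0 and v''(r) + ((n−1)/r) v'(r) = F(v(r)) for all r ∈ (0,1). If F(v(r)) ≥ 0 for all r ∈ (0,1), then v'(r) ≥ 0 for all r ∈ [0,1]; in particular v is nondecreasing on [0,1]. -/

import Mathlib

open Set

/-!
Put `w = v'` and `a = n - 1 > 0`. The integrating factor `r ^ a` gives
`r ^ a * (w' + (a / r) * w) = (r ^ a * w)'`, so the flux `r ^ a * w` is monotone. It vanishes at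
the origin because the weight does, hence `w` is nonnegative for `r > 0`. At `r = 0` itself the
degenerate weight carries no information, and the sign of `w` is inherited by continuity.
-/

section RadialDifferentialInequality

variable {a R : ℝ} {w w' : ℝ → ℝ}

theorem hasDerivAt_rpow_mul {r d : ℝ} (hr : 0 < r) (hw : HasDerivAt w d r) :
    HasDerivAt (fun s ↦ s ^ a * w s) (r ^ a * (d + a / r * w r)) r := by
  have hpow : HasDerivAt (fun s : ℝ ↦ s ^ a) (a * r ^ (a - 1)) r :=
    Real.hasDerivAt_rpow_const (Or.inl hr.ne')
  refine (hpow.mul hw).congr_deriv ?_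
  rw [Real.rpow_sub_one hr.ne']
  ring

theorem monotoneOn_rpow_mul (ha : 0 ≤ a) (hcont : ContinuousOn w (Icc 0 R))
    (hderiv : ∀ r ∈ Ioo 0 R, HasDerivAt w (w' r) r)
    (hineq : ∀ r ∈ Ioo 0 R, 0 ≤ w' r + a / r * w r) :
    MonotoneOn (fun r ↦ r ^ a * w r) (Icc 0 R) := by
  have hflux : ∀ r ∈ Ioo 0 R,
      HasDerivAt (fun s ↦ s ^ a * w s) (r ^ a * (w' r + a / r * w r)) r :=
    fun r hr ↦ hasDerivAt_rpow_mul hr.1 (hderiv r hr)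
  have hflux_nonneg : ∀ r ∈ Ioo 0 R, 0 ≤ r ^ a * (w' r + a / r * w r) :=
    fun r hr ↦ mul_nonneg (Real.rpow_nonneg hr.1.le a) (hineq r hr)
  rw [← interior_Icc] at hflux hflux_nonneg
  exact monotoneOn_of_hasDerivWithinAt_nonneg (convex_Icc 0 R)
    ((Real.continuous_rpow_const ha).continuousOn.mul hcont)
    (fun r hr ↦ (hflux r hr).hasDerivWithinAt) hflux_nonneg

theorem nonneg_of_monotoneOn_rpow_mul (ha : 0 < a)
    (hmono : MonotoneOn (fun r ↦ r ^ a * w r) (Icc 0 R)) {r : ℝ} (hr : r ∈ Ioc 0 R) :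
    0 ≤ w r := by
  have hflux : 0 ^ a * w 0 ≤ r ^ a * w r :=
    hmono (left_mem_Icc.2 (hr.1.le.trans hr.2)) (Ioc_subset_Icc_self hr) hr.1.le
  rw [Real.zero_rpow ha.ne', zero_mul] at hflux
  exact nonneg_of_mul_nonneg_right hflux (Real.rpow_pos_of_pos hr.1 a)

theorem stmt_4_general (ha : 0 < a) (hR : 0 < R) (hcont : ContinuousOn w (Icc 0 R))
    (hderiv : ∀ r ∈ Ioo 0 R, HasDerivAt w (w' r) r)
    (hineq : ∀ r ∈ Ioo 0 R, 0 ≤ w' r + a / r * w r) :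
    ∀ r ∈ Icc 0 R, 0 ≤ w r := by
  have hpos : ∀ r ∈ Ioc 0 R, 0 ≤ w r := fun _ ↦
    nonneg_of_monotoneOn_rpow_mul ha (monotoneOn_rpow_mul ha.le hcont hderiv hineq)
  rw [← closure_Ioc hR.ne] at hcont ⊢
  exact le_on_closure hpos continuousOn_const hcont

end RadialDifferentialInequality

theorem stmt_4 (n : ℕ) (hn : 2 ≤ n)
    (F : ℝ → ℝ) (hF : Continuous F)
    (v v' v'' : ℝ → ℝ)
    (hderiv1 : ∀ r ∈ Icc (0:ℝ) 1, HasDerivWithinAt v (v' r) (Icc (0:ℝ) 1) r)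
    (hcont1 : ContinuousOn v' (Icc (0:ℝ) 1))
    (hderiv2 : ∀ r ∈ Ioo (0:ℝ) 1, HasDerivAt v' (v'' r) r)
    (hcont2 : ContinuousOn v'' (Ioo (0:ℝ) 1))
    (hv'0 : v' 0 = 0)
    (hODE : ∀ r ∈ Ioo (0:ℝ) 1, v'' r + (((n : ℝ) - 1) / r) * v' r = F (v r))
    (hFpos : ∀ r ∈ Ioo (0:ℝ) 1, 0 ≤ F (v r)) :
    ∀ r ∈ Icc (0:ℝ) 1, 0 ≤ v' r :=
  stmt_4_general (sub_pos.2 (Nat.one_lt_cast.2 hn)) zero_lt_one hcont1 hderiv2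
    fun r hr ↦ (hFpos r hr).trans_eq (hODE r hr).symm
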